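/- Let G be a finite group which is a central product G = MC, where M is a perfect group with center Z(M) of order 3 and M/Z(M) ≅ A6 (so M is the triple cover 3·A6), C is a subgroup commuting elementwise with M, and M ∩ C = Z(M). Then the average of the degrees of the irreducible complex characters of G is at least 16/5. -/

import Mathlib

open CategoryTheory

/-- The set of irreducible complex characters of `G`: characters of simple
finite-dimensional complex representations of `G`. -/
noncomputable def IrrChar (G : Type) [Group G] : Set (G → ℂ) :=
  {χ | ∃ V : FDRep ℂ G, Simple V ∧ χ = fun g => V.character g}

/-- The degree of a character, read off from its value at `1`. -/
noncomputable def charDeg {G : Type} [Group G] (χ : G → ℂ) : ℕ :=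
  ⌊(χ 1).re⌋₊

/-- The average degree of the irreducible characters of `G` satisfying a
predicate `p` (with the convention that the average of the empty set is `0`). -/
noncomputable def acdRel (G : Type) [Group G] (p : (G → ℂ) → Prop) : ℝ :=
  (∑ᶠ χ ∈ {χ ∈ IrrChar G | p χ}, (charDeg χ : ℝ)) /
    ({χ ∈ IrrChar G | p χ} : Set (G → ℂ)).ncard

/-- The average character degree of `G`. -/
noncomputable def acd (G : Type) [Group G] : ℝ := acdRel G fun _ => True
section CharTheory

open Representation

lemma ofrep_mem_irr {G : Type} [Group G] [Fintype G] {V : Type} [AddCommGroup V] [Module ℂ V]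
    [FiniteDimensional ℂ V] (ρ : Representation ℂ G V)
    (h : ∑ g : G, ρ.character g * ρ.character g⁻¹ = Nat.card G) :
    ρ.character ∈ IrrChar G :=
  ⟨FDRep.of ρ, (FDRep.simple_iff_char_is_norm_one _).2 h, rfl⟩

lemma exists_rep_of_mem_irr {G : Type} [Group G] [Fintype G] {χ : G → ℂ} (h : χ ∈ IrrChar G) :
    ∃ (V : Type) (_ : AddCommGroup V) (_ : Module ℂ V) (_ : FiniteDimensional ℂ V)
      (ρ : Representation ℂ G V), χ = ρ.character ∧
      ∑ g : G, χ g * χ g⁻¹ = Nat.card G := by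
  obtain ⟨V, hV, rfl⟩ := h
  exact ⟨V, inferInstance, inferInstance, inferInstance, V.ρ, rfl,
    (FDRep.simple_iff_char_is_norm_one V).1 hV⟩

lemma irr_orth {G : Type} [Group G] [Fintype G] {χ ψ : G → ℂ} (hχ : χ ∈ IrrChar G)
    (hψ : ψ ∈ IrrChar G) (hne : χ ≠ ψ) : ∑ g : G, χ g * ψ g⁻¹ = 0 := by
  obtain ⟨V, hV, rfl⟩ := hχ
  obtain ⟨W, hW, rfl⟩ := hψ
  have hcard : (Nat.card G : ℂ) ≠ 0 := Nat.cast_ne_zero.2 Nat.card_pos.ne'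
  let _ := invertibleOfNonzero hcard
  have h := FDRep.char_orthonormal V W
  rw [if_neg] at h
  · exact (mul_eq_zero.1 h).resolve_left (inv_ne_zero hcard)
  · rintro ⟨i⟩
    exact hne (by rw [FDRep.char_iso i])

lemma irr_norm {G : Type} [Group G] [Fintype G] {χ : G → ℂ} (hχ : χ ∈ IrrChar G) :
    ∑ g : G, χ g * χ g⁻¹ = Nat.card G := by
  obtain ⟨V, _, _, _, ρ, rfl, h⟩ := exists_rep_of_mem_irr hχ
  exact h

lemma irreducible_mem_irr {G : Type} [Group G] [Fintype G] {V : Type} [AddCommGroup V]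
    [Module ℂ V] [FiniteDimensional ℂ V] (ρ : Representation ℂ G V) [IsIrreducible ρ] :
    ρ.character ∈ IrrChar G := by
  have hcard : (Nat.card G : ℂ) ≠ 0 := Nat.cast_ne_zero.2 Nat.card_pos.ne'
  let _ := invertibleOfNonzero hcard
  apply ofrep_mem_irr
  have h := Representation.char_orthonormal ρ ρ
  rw [if_pos ⟨Representation.Equiv.refl ρ⟩] at h
  field_simp at h
  simpa using h

/-- A representation whose character has norm one: endomorphisms are scalar. -/
lemma schur_scalar {G : Type} [Group G] [Fintype G] {V : Type} [AddCommGroup V] [Module ℂ V]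
    [FiniteDimensional ℂ V] (ρ : Representation ℂ G V)
    (h : ∑ g : G, ρ.character g * ρ.character g⁻¹ = Nat.card G) (T : V →ₗ[ℂ] V)
    (hT : ∀ g, T ∘ₗ ρ g = ρ g ∘ₗ T) : ∃ c : ℂ, T = c • LinearMap.id := by
  have hcard : (Nat.card G : ℂ) ≠ 0 := Nat.cast_ne_zero.2 Nat.card_pos.ne'
  let _ := invertibleOfNonzero hcard
  have h1 := Representation.card_inv_mul_sum_char_mul_char_eq_finrank ρ ρ
  rw [h, inv_mul_cancel₀ hcard] at h1
  have h2 : Module.finrank ℂ (IntertwiningMap ρ ρ) = 1 := by exact_mod_cast h1.symm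
  have hid : (IntertwiningMap.id ρ) ≠ 0 := by
    intro h0
    have : ∀ v : V, v = 0 := fun v => by
      have := congrArg (fun f : IntertwiningMap ρ ρ => f v) h0
      simpa using this
    have hs : Subsingleton (IntertwiningMap ρ ρ) := ⟨fun a b => by
      ext v; rw [this v]; simp⟩
    rw [Module.finrank_zero_of_subsingleton] at h2
    exact zero_ne_one h2
  obtain ⟨c, hc⟩ := (finrank_eq_one_iff_of_nonzero' _ hid).1 h2
    (⟨T, fun g => by rw [hT g]⟩ : IntertwiningMap ρ ρ)
  refine ⟨c, ?_⟩
  have := congrArg IntertwiningMap.toLinearMap hc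
  exact this.symm

lemma sum_rep_zero {G : Type} [Group G] [Fintype G] (f : G → ℂ)
    (key : ∀ (V : Type) [AddCommGroup V] [Module ℂ V] [FiniteDimensional ℂ V]
      (ρ : Representation ℂ G V) [IsIrreducible ρ], ∑ g, f g • ρ g = 0) (n : ℕ) :
    ∀ (V : Type) [AddCommGroup V] [Module ℂ V] [FiniteDimensional ℂ V]
      (ρ : Representation ℂ G V), Module.finrank ℂ V = n → ∀ v, ∑ g, f g • ρ g v = 0 := by
  induction n using Nat.strong_induction_on with
  | _ n ih =>
  intro V _ _ _ ρ hn v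
  have hsub : ∀ σ : Subrepresentation ρ, σ ≠ ⊤ → ∀ w ∈ σ, ∑ g, f g • ρ g w = 0 := by
    intro σ hσ w hw
    have hlt : Module.finrank ℂ σ.toSubmodule < n := by
      rw [← hn]
      apply Submodule.finrank_lt
      intro h
      exact hσ (Subrepresentation.toSubmodule_injective h)
    have := ih _ hlt σ.toSubmodule σ.toRepresentation rfl ⟨w, hw⟩
    have := congrArg Subtype.val this
    simpa [Subrepresentation.toRepresentation] using this
  by_cases hV : Nontrivial V
  · by_cases hirr : IsIrreducible ρ
    · have := congrArg (fun T : V →ₗ[ℂ] V => T v) (key V ρ)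
      simpa using this
    · have hnt : Nontrivial (Subrepresentation ρ) := by
        refine ⟨⊥, ⊤, fun h => ?_⟩
        have h2 : (⊥ : Submodule ℂ V) = ⊤ := congrArg Subrepresentation.toSubmodule h
        exact bot_ne_top h2
      have : ∃ σ : Subrepresentation ρ, σ ≠ ⊥ ∧ σ ≠ ⊤ := by
        by_contra hcon
        push Not at hcon
        exact hirr ⟨fun a => or_iff_not_imp_left.2 (hcon a)⟩
      obtain ⟨σ, h1, h2⟩ := this
      have : NeZero (Nat.card G : ℂ) := ⟨Nat.cast_ne_zero.2 Nat.card_pos.ne'⟩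
      have hss : IsSemisimpleRepresentation ρ := by infer_instance
      obtain ⟨τ, hτ⟩ := hss.exists_isCompl σ
      have hτ2 : τ ≠ ⊤ := by
        rintro rfl
        exact h1 (by simpa using hτ.inf_eq_bot)
      have hv : v ∈ (σ ⊔ τ).toSubmodule := by
        rw [hτ.sup_eq_top]; trivial
      rw [Subrepresentation.toSubmodule_sup] at hv
      obtain ⟨a, ha, b, hb, rfl⟩ := Submodule.mem_sup.1 hv
      simp only [map_add, smul_add, Finset.sum_add_distrib]
      rw [hsub σ h2 a ha, hsub τ hτ2 b hb, add_zero]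
  · rw [not_nontrivial_iff_subsingleton] at hV
    exact Subsingleton.elim _ _

lemma complete_aux {G : Type} [Group G] [Fintype G] (f : G → ℂ)
    (hf : ∀ g h, f (h * g * h⁻¹) = f g)
    (h0 : ∀ χ ∈ IrrChar G, ∑ g, f g * χ g = 0) : f = 0 := by
  classical
  have key : ∀ (V : Type) [AddCommGroup V] [Module ℂ V] [FiniteDimensional ℂ V]
      (ρ : Representation ℂ G V) [IsIrreducible ρ], ∑ g, f g • ρ g = 0 := by
    intro V _ _ _ ρ _
    have hmem := irreducible_mem_irr ρ
    obtain ⟨c, hc⟩ := schur_scalar ρ (irr_norm hmem) (∑ g, f g • ρ g) (by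
      intro x
      change (∑ g, f g • ρ g) * ρ x = ρ x * (∑ g, f g • ρ g)
      rw [Finset.sum_mul, Finset.mul_sum]
      refine Fintype.sum_equiv (MulAut.conj x⁻¹).toEquiv _ _ (fun g => ?_)
      have e1 : f ((MulAut.conj x⁻¹).toEquiv g) = f g := hf g x⁻¹
      rw [e1, smul_mul_assoc, mul_smul_comm, ← map_mul, ← map_mul]
      congr 2
      simp [mul_assoc])
    have htr := congrArg (LinearMap.trace ℂ V) hc
    have h1 := h0 _ hmem
    simp only [map_sum, map_smul, smul_eq_mul, LinearMap.trace_id] at htr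
    rw [show ∑ x, f x * (LinearMap.trace ℂ V) (ρ x) = 0 from h1] at htr
    have hnt : Nontrivial V := by
      by_contra hV
      rw [not_nontrivial_iff_subsingleton] at hV
      have : Module.finrank ℂ (IntertwiningMap ρ ρ) = 1 := by simp
      have hs : Subsingleton (IntertwiningMap ρ ρ) := ⟨fun a b => by
        ext v; exact Subsingleton.elim _ _⟩
      rw [Module.finrank_zero_of_subsingleton] at this
      exact zero_ne_one this
    have hd : (Module.finrank ℂ V : ℂ) ≠ 0 := Nat.cast_ne_zero.2 Module.finrank_pos.ne'
    have hc0 : c = 0 := (mul_eq_zero.1 htr.symm).resolve_right hd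
    rw [hc, hc0, zero_smul]
  have h1 := sum_rep_zero f key _ (MonoidAlgebra ℂ G) (Representation.leftRegular ℂ G) rfl
    (MonoidAlgebra.single 1 1)
  funext g
  have := congrArg (fun b : MonoidAlgebra ℂ G => b.coeff g) h1
  simpa [Finsupp.single_apply] using this

end CharTheory
section CharTheory2

open Representation

lemma irr_class {G : Type} [Group G] {χ : G → ℂ} (hχ : χ ∈ IrrChar G) (g h : G) :
    χ (h * g * h⁻¹) = χ g := by
  obtain ⟨V, _, rfl⟩ := hχ
  exact FDRep.char_conj V g h

/-- a class function seen as a function on conjugacy classes -/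
noncomputable def toCF {G : Type} [Group G] (χ : IrrChar G) : ConjClasses G → ℂ :=
  Quotient.lift χ.1 (by
    intro a b hab
    obtain ⟨c, hc⟩ := isConj_iff.1 hab
    rw [← hc, irr_class χ.2])

lemma toCF_mk {G : Type} [Group G] (χ : IrrChar G) (g : G) :
    toCF χ (ConjClasses.mk g) = χ.1 g := rfl

lemma toCF_li {G : Type} [Group G] [Fintype G] : LinearIndependent ℂ (toCF (G := G)) := by
  classical
  rw [linearIndependent_iff']
  intro s c hc i hi
  have h1 : ∀ g : G, ∑ j ∈ s, c j * j.1 g = 0 := by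
    intro g
    have := congrFun hc (ConjClasses.mk g)
    simpa [toCF_mk] using this
  have h2 : ∑ g : G, (∑ j ∈ s, c j * j.1 g) * i.1 g⁻¹ = 0 := by simp [h1]
  simp_rw [Finset.sum_mul] at h2
  rw [Finset.sum_comm, Finset.sum_eq_single i] at h2
  · simp_rw [mul_assoc] at h2
    rw [← Finset.mul_sum, irr_norm i.2] at h2
    exact (mul_eq_zero.1 h2).resolve_right (Nat.cast_ne_zero.2 Nat.card_pos.ne')
  · intro j _ hj
    simp_rw [mul_assoc]
    rw [← Finset.mul_sum, irr_orth j.2 i.2 (fun h => hj (Subtype.ext h)), mul_zero]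
  · exact fun h => absurd hi h

lemma irr_finite (G : Type) [Group G] [Finite G] : (IrrChar G).Finite := by
  cases nonempty_fintype G
  have : Finite (IrrChar G) := (toCF_li (G := G)).finite
  exact Set.toFinite _

/-- the finset of irreducible characters -/
noncomputable def irrF (G : Type) [Group G] [Finite G] : Finset (G → ℂ) :=
  (irr_finite G).toFinset

lemma mem_irrF {G : Type} [Group G] [Finite G] {χ : G → ℂ} : χ ∈ irrF G ↔ χ ∈ IrrChar G := by
  simp [irrF]

lemma irr_expand {G : Type} [Group G] [Fintype G] (f : G → ℂ)
    (hf : ∀ g h, f (h * g * h⁻¹) = f g) (x : G) :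
    f x = ∑ χ ∈ irrF G, ((∑ g, f g * χ g⁻¹) / Nat.card G) * χ x := by
  classical
  have hcard : (Nat.card G : ℂ) ≠ 0 := Nat.cast_ne_zero.2 Nat.card_pos.ne'
  let r : G → ℂ := fun x => f x - ∑ χ ∈ irrF G, ((∑ g, f g * χ g⁻¹) / Nat.card G) * χ x
  have hr : ∀ g h, r (h * g * h⁻¹) = r g := by
    intro g h
    simp only [r, hf]
    congr 1
    refine Finset.sum_congr rfl fun χ hχ => ?_
    rw [irr_class (mem_irrF.1 hχ)]
  have hz : (fun g => r g⁻¹) = 0 := by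
    apply complete_aux
    · intro g h
      rw [← hr g⁻¹ h]; congr 1; group
    · intro ψ hψ
      rw [← Equiv.sum_comp (Equiv.inv G)]
      simp only [Equiv.inv_apply, inv_inv, r, sub_mul, Finset.sum_sub_distrib, Finset.sum_mul]
      rw [Finset.sum_comm (s := Finset.univ), Finset.sum_eq_single ψ]
      · simp_rw [mul_assoc]
        rw [← Finset.mul_sum, irr_norm hψ, div_mul_cancel₀ _ hcard, sub_self]
      · intro χ hχ hne
        simp_rw [mul_assoc]
        rw [← Finset.mul_sum, irr_orth (mem_irrF.1 hχ) hψ hne, mul_zero]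
      · exact fun h => absurd (mem_irrF.2 hψ) h
  have := congrFun hz x⁻¹
  simp only [inv_inv, Pi.zero_apply, r] at this
  exact sub_eq_zero.1 this

lemma card_irrF (G : Type) [Group G] [Finite G] :
    (irrF G).card = Nat.card (ConjClasses G) := by
  classical
  cases nonempty_fintype G
  have hspan : ⊤ ≤ Submodule.span ℂ (Set.range (toCF (G := G))) := by
    intro F _
    have h1 : F = ∑ χ : irrF G, ((∑ g, F (ConjClasses.mk g) * χ.1 g⁻¹) / Nat.card G) •
        toCF ⟨χ.1, mem_irrF.1 χ.2⟩ := by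
      funext c
      obtain ⟨x, rfl⟩ := ConjClasses.exists_rep c
      have := irr_expand (fun g => F (ConjClasses.mk g)) (by
        intro g h
        congr 1
        exact (ConjClasses.mk_eq_mk_iff_isConj.2 (isConj_iff.2 ⟨h, rfl⟩)).symm) x
      rw [this, ← Finset.sum_coe_sort]
      simp [toCF_mk]
    rw [h1]
    exact Submodule.sum_mem _ fun χ _ => Submodule.smul_mem _ _ (Submodule.subset_span ⟨_, rfl⟩)
  let b := Module.Basis.mk (toCF_li (G := G)) hspan
  have h1 := Module.finrank_eq_nat_card_basis b
  have : Fintype (ConjClasses G) := Fintype.ofFinite _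
  rw [Module.finrank_fintype_fun_eq_card] at h1
  rw [Nat.card_eq_fintype_card, h1, Nat.card_coe_set_eq, irrF, Set.ncard_eq_toFinset_card _ (irr_finite G)]

lemma irr_deg {G : Type} [Group G] {χ : G → ℂ} (hχ : χ ∈ IrrChar G) : χ 1 = (charDeg χ : ℂ) := by
  obtain ⟨V, _, rfl⟩ := hχ
  simp [charDeg]

lemma sum_sq_deg (G : Type) [Group G] [Finite G] :
    ∑ χ ∈ irrF G, (charDeg χ) ^ 2 = Nat.card G := by
  classical
  cases nonempty_fintype G
  have hcard : (Nat.card G : ℂ) ≠ 0 := Nat.cast_ne_zero.2 Nat.card_pos.ne'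
  have h := irr_expand (G := G) (Pi.single 1 1) (by
    intro g h
    by_cases hg : g = 1
    · subst hg; simp
    · have : h * g * h⁻¹ ≠ 1 := by simpa using hg
      simp [hg]) 1
  simp only [Pi.single_apply, ite_mul, one_mul, zero_mul, Finset.sum_ite_eq', Finset.mem_univ,
    if_true, inv_one] at h
  have h2 : (Nat.card G : ℂ) = ∑ χ ∈ irrF G, (charDeg χ : ℂ) ^ 2 := by
    rw [← mul_one (Nat.card G : ℂ), h, Finset.mul_sum]
    refine Finset.sum_congr rfl fun χ hχ => ?_
    rw [irr_deg (mem_irrF.1 hχ)]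
    field_simp
  exact_mod_cast h2.symm

lemma deg_pos {G : Type} [Group G] [Finite G] {χ : G → ℂ} (hχ : χ ∈ IrrChar G) :
    0 < charDeg χ := by
  cases nonempty_fintype G
  obtain ⟨V, _, _, _, ρ, rfl, h⟩ := exists_rep_of_mem_irr hχ
  have h1 := irr_deg hχ
  by_contra h0
  have h0 : charDeg ρ.character = 0 := by omega
  rw [h0, Representation.char_one] at h1
  have hd : Module.finrank ℂ V = 0 := by exact_mod_cast h1
  have : Subsingleton V := Module.finrank_zero_iff.1 hd
  have hz : ∀ g, ρ.character g = 0 := fun g => by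
    rw [Representation.character, Subsingleton.elim (ρ g) 0, map_zero]
  simp only [hz, mul_zero, Finset.sum_const_zero] at h
  exact Nat.card_pos.ne' (by exact_mod_cast h.symm : Nat.card G = 0)

end CharTheory2
section CharTheory3

open Representation

lemma perfect_hom_trivial {M A : Type*} [Group M] [CommGroup A] (hM : commutator M = ⊤)
    (f : M →* A) (m : M) : f m = 1 := by
  have h := Abelianization.commutator_subset_ker f
  rw [hM] at h
  exact h (Subgroup.mem_top m)

lemma perfect_det {M V : Type*} [Group M] [AddCommGroup V] [Module ℂ V]
    (hM : commutator M = ⊤) (ρ : Representation ℂ M V) (m : M) : LinearMap.det (ρ m) = 1 := by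
  have := perfect_hom_trivial hM
    ((Units.map (LinearMap.det : (V →ₗ[ℂ] V) →* ℂ)).comp ρ.asGroupHom) m
  have := congrArg Units.val this
  simpa [asGroupHom_apply] using this

lemma linear_trivial {G : Type} [Group G] [Finite G] (hG : commutator G = ⊤) {χ : G → ℂ}
    (hχ : χ ∈ IrrChar G) (h1 : charDeg χ = 1) : χ = 1 := by
  cases nonempty_fintype G
  obtain ⟨V, _, _, _, ρ, rfl, h⟩ := exists_rep_of_mem_irr hχ
  have h2 := irr_deg hχ
  rw [h1, Representation.char_one] at h2
  have hd : Module.finrank ℂ V = 1 := by exact_mod_cast h2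
  funext g
  obtain ⟨c, hc, -⟩ := LinearMap.existsUnique_eq_smul_id_of_finrank_eq_one hd (ρ g)
  have hdet := perfect_det hG ρ g
  rw [hc, LinearMap.det_smul, hd, LinearMap.det_id] at hdet
  rw [Representation.character, hc, map_smul, LinearMap.trace_id, hd]
  simpa using hdet

lemma three_dvd {G : Type} [Group G] [Finite G] (M : Subgroup G) (hM : commutator M = ⊤)
    {V : Type} [AddCommGroup V] [Module ℂ V] [FiniteDimensional ℂ V] (ρ : Representation ℂ G V)
    (hχ : ρ.character ∈ IrrChar G) (z : G) (hz : z ∈ M) (hzc : ∀ g, z * g = g * z)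
    (hz3 : z ^ 3 = 1) (hne : ρ z ≠ 1) : 3 ∣ charDeg ρ.character := by
  cases nonempty_fintype G
  have h2 := irr_deg hχ
  rw [Representation.char_one] at h2
  have h2 : Module.finrank ℂ V = charDeg ρ.character := by exact_mod_cast h2
  obtain ⟨c, hc⟩ := schur_scalar ρ (irr_norm hχ) (ρ z) (fun g => by
    change ρ z * ρ g = ρ g * ρ z
    rw [← map_mul, hzc, map_mul])
  have hdet := perfect_det hM (ρ.comp M.subtype) ⟨z, hz⟩
  have hdet : LinearMap.det (ρ z) = 1 := hdet
  rw [hc, LinearMap.det_smul, LinearMap.det_id, mul_one, h2] at hdet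
  have hnt : Nontrivial V := by
    by_contra hV
    rw [not_nontrivial_iff_subsingleton] at hV
    exact hne (Subsingleton.elim _ _)
  have hc3 : c ^ 3 = 1 := by
    have h3 : ρ z ^ 3 = 1 := by rw [← map_pow, hz3, map_one]
    rw [hc, smul_pow] at h3
    obtain ⟨v, hv⟩ := exists_ne (0 : V)
    have h4 := congrArg (fun T : V →ₗ[ℂ] V => T v) h3
    change c ^ 3 • (((1 : V →ₗ[ℂ] V) ^ 3) v) = v at h4
    rw [one_pow] at h4
    change c ^ 3 • v = v at h4
    have h5 : (c ^ 3 - 1) • v = 0 := by rw [sub_smul, h4, one_smul, sub_self]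
    exact sub_eq_zero.1 ((smul_eq_zero.1 h5).resolve_right hv)
  have hc1 : c ≠ 1 := by
    rintro rfl
    apply hne
    rw [hc, one_smul]; rfl
  have : Fact (Nat.Prime 3) := ⟨Nat.prime_three⟩
  rw [← orderOf_eq_prime hc3 hc1]
  exact orderOf_dvd_of_pow_eq_one hdet

lemma sum_comp_surj {G H : Type} [Group G] [Group H] [Fintype G] [Fintype H] (π : G →* H)
    (hπ : Function.Surjective π) (F : H → ℂ) :
    ∑ g, F (π g) * Nat.card H = (∑ h, F h) * Nat.card G := by
  classical
  have h1 : ∀ h : H, (Finset.univ.filter (fun g => π g = h)).card =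
      (Finset.univ.filter (fun g => π g = 1)).card := fun h =>
    MonoidHom.card_fiber_eq_of_mem_range π (hπ h) (hπ 1)
  have h2 : ∀ F : H → ℂ, ∑ g, F (π g) =
      (Finset.univ.filter (fun g => π g = 1)).card * ∑ h, F h := by
    intro F
    rw [← Finset.sum_fiberwise Finset.univ π, Finset.mul_sum]
    refine Finset.sum_congr rfl fun h _ => ?_
    rw [← h1 h, ← nsmul_eq_mul, ← Finset.sum_const]
    refine Finset.sum_congr rfl fun g hg => ?_
    rw [(Finset.mem_filter.1 hg).2]
  have h3 := h2 1
  simp only [Pi.one_apply, Finset.sum_const, Finset.card_univ, nsmul_eq_mul, mul_one] at h3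
  rw [← Finset.sum_mul, h2, Nat.card_eq_fintype_card, Nat.card_eq_fintype_card, h3]
  ring

lemma inflate {G H : Type} [Group G] [Group H] [Finite G] [Finite H] (π : G →* H)
    (hπ : Function.Surjective π) {φ : H → ℂ} (hφ : φ ∈ IrrChar H) :
    (fun g => φ (π g)) ∈ IrrChar G := by
  cases nonempty_fintype G
  cases nonempty_fintype H
  have hcard : (Nat.card H : ℂ) ≠ 0 := Nat.cast_ne_zero.2 Nat.card_pos.ne'
  obtain ⟨V, _, _, _, ρ, rfl, h⟩ := exists_rep_of_mem_irr hφ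
  apply ofrep_mem_irr (ρ.comp π)
  have h1 := sum_comp_surj π hπ (fun x => ρ.character x * ρ.character x⁻¹)
  rw [h, ← Finset.sum_mul, mul_comm] at h1
  have h2 := mul_left_cancel₀ hcard h1
  rw [← h2]
  refine Finset.sum_congr rfl fun g _ => ?_
  rw [← map_inv]; rfl

lemma deflate {G H : Type} [Group G] [Group H] [Finite G] [Finite H] (π : G →* H)
    (hπ : Function.Surjective π) {V : Type} [AddCommGroup V] [Module ℂ V] [FiniteDimensional ℂ V]
    (ρ : Representation ℂ G V) (hχ : ρ.character ∈ IrrChar G) (hker : ∀ g, π g = 1 → ρ g = 1) :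
    ∃ φ ∈ IrrChar H, ρ.character = fun g => φ (π g) := by
  cases nonempty_fintype G
  cases nonempty_fintype H
  have hcard : (Nat.card G : ℂ) ≠ 0 := Nat.cast_ne_zero.2 Nat.card_pos.ne'
  have hwd : ∀ a b, π a = π b → ρ a = ρ b := by
    intro a b hab
    have h1 : ρ (a * b⁻¹) = 1 := hker _ (by simp [hab])
    calc ρ a = ρ (a * b⁻¹ * b) := by group
      _ = ρ b := by rw [map_mul, h1, one_mul]
  let s := Function.surjInv hπ
  have hs : ∀ h, π (s h) = h := Function.surjInv_eq hπ
  let σ : Representation ℂ H V :=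
    { toFun := fun h => ρ (s h)
      map_one' := hker _ (hs 1)
      map_mul' := fun a b => by
        rw [← map_mul]
        exact hwd _ _ (by rw [map_mul, hs, hs, hs]) }
  have hchar : ∀ g, ρ.character g = σ.character (π g) := by
    intro g
    change LinearMap.trace ℂ V (ρ g) = LinearMap.trace ℂ V (ρ (s (π g)))
    rw [hwd g (s (π g)) (hs _).symm]
  refine ⟨σ.character, ofrep_mem_irr σ ?_, funext hchar⟩
  have h1 := sum_comp_surj π hπ (fun x => σ.character x * σ.character x⁻¹)
  have h2 := irr_norm hχ
  simp_rw [hchar, map_inv] at h2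
  rw [← Finset.sum_mul, h2, mul_comm] at h1
  exact (mul_right_cancel₀ hcard h1).symm

/-- external product of functions -/
def extProd {A B : Type} (p : (A → ℂ) × (B → ℂ)) : A × B → ℂ := fun h => p.1 h.1 * p.2 h.2

lemma extProd_mem {A B : Type} [Group A] [Group B] [Finite A] [Finite B] {χ : A → ℂ} {ψ : B → ℂ}
    (hχ : χ ∈ IrrChar A) (hψ : ψ ∈ IrrChar B) : extProd (χ, ψ) ∈ IrrChar (A × B) := by
  cases nonempty_fintype A
  cases nonempty_fintype B
  obtain ⟨V, _, _, _, ρ, rfl, h⟩ := exists_rep_of_mem_irr hχ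
  obtain ⟨W, _, _, _, σ, rfl, h'⟩ := exists_rep_of_mem_irr hψ
  have hc : (Representation.tprod (ρ.comp (MonoidHom.fst A B))
      (σ.comp (MonoidHom.snd A B))).character = extProd (ρ.character, σ.character) := by
    rw [char_tensor]; rfl
  rw [← hc]
  apply ofrep_mem_irr
  rw [hc, Nat.card_prod, Nat.cast_mul, ← h, ← h', Finset.sum_mul_sum, Fintype.sum_prod_type]
  refine Finset.sum_congr rfl fun a _ => Finset.sum_congr rfl fun b _ => ?_
  simp only [extProd, Prod.fst_inv, Prod.snd_inv]
  ring

lemma extProd_inj {A B : Type} [Group A] [Group B] [Finite A] [Finite B] :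
    Set.InjOn (extProd (A := A) (B := B)) (irrF A ×ˢ irrF B : Finset _) := by
  cases nonempty_fintype A
  cases nonempty_fintype B
  rintro ⟨χ, ψ⟩ h1 ⟨χ', ψ'⟩ h2 heq
  simp only [Finset.coe_product, Set.mem_prod, Finset.mem_coe, mem_irrF] at h1 h2
  have hn := irr_norm (extProd_mem h1.1 h1.2)
  have hn2 : (∑ a, χ a * χ' a⁻¹) * (∑ b, ψ b * ψ' b⁻¹) = Nat.card (A × B) := by
    rw [← hn, Finset.sum_mul_sum, Fintype.sum_prod_type]
    refine Finset.sum_congr rfl fun a _ => Finset.sum_congr rfl fun b _ => ?_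
    conv_rhs => rw [heq]
    rw [← heq]
    have := congrFun heq (a⁻¹, b⁻¹)
    simp only [extProd, Prod.inv_mk] at this ⊢
    rw [this]; ring
  have hne : (Nat.card (A × B) : ℂ) ≠ 0 := Nat.cast_ne_zero.2 Nat.card_pos.ne'
  have e1 : χ = χ' := by
    by_contra hne'
    rw [irr_orth h1.1 h2.1 hne', zero_mul] at hn2
    exact hne hn2.symm
  have e2 : ψ = ψ' := by
    by_contra hne'
    rw [irr_orth h1.2 h2.2 hne', mul_zero] at hn2
    exact hne hn2.symm
  rw [e1, e2]

lemma card_conj_prod (A B : Type) [Group A] [Group B] [Finite A] [Finite B] :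
    Nat.card (ConjClasses (A × B)) ≤ Nat.card (ConjClasses A) * Nat.card (ConjClasses B) := by
  rw [← Nat.card_prod]
  apply Nat.card_le_card_of_injective (fun c : ConjClasses (A × B) =>
    (ConjClasses.map (MonoidHom.fst A B) c, ConjClasses.map (MonoidHom.snd A B) c))
  intro c d h
  obtain ⟨⟨a, b⟩, rfl⟩ := ConjClasses.exists_rep c
  obtain ⟨⟨a', b'⟩, rfl⟩ := ConjClasses.exists_rep d
  simp only [Prod.mk.injEq] at h
  obtain ⟨h1, h2⟩ := h
  have h1 : ConjClasses.mk a = ConjClasses.mk a' := h1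
  have h2 : ConjClasses.mk b = ConjClasses.mk b' := h2
  rw [ConjClasses.mk_eq_mk_iff_isConj, isConj_iff] at h1 h2 ⊢
  obtain ⟨x, hx⟩ := h1
  obtain ⟨y, hy⟩ := h2
  exact ⟨(x, y), by simp [hx, hy]⟩

lemma card_conj_ext {G H : Type} [Group G] [Group H] [Finite G] [Finite H] (π : G →* H)
    (hπ : Function.Surjective π) :
    Nat.card (ConjClasses G) ≤ Nat.card π.ker * Nat.card (ConjClasses H) := by
  rw [← Nat.card_prod]
  let s := Function.surjInv hπ
  have hs : ∀ h, π (s h) = h := Function.surjInv_eq hπ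
  let r : ConjClasses H → H := Quotient.out
  have hr : ∀ c, ConjClasses.mk (r c) = c := Quotient.out_eq
  apply Nat.card_le_card_of_surjective (fun p : π.ker × ConjClasses H =>
    ConjClasses.mk (p.1.1 * s (r p.2)))
  intro c
  obtain ⟨g, rfl⟩ := ConjClasses.exists_rep c
  have h1 := hr (ConjClasses.mk (π g))
  rw [ConjClasses.mk_eq_mk_iff_isConj, isConj_iff] at h1
  obtain ⟨x, hx⟩ := h1
  let y := s x
  let h := r (ConjClasses.mk (π g))
  refine ⟨(⟨y⁻¹ * g * y * (s h)⁻¹, ?_⟩, ConjClasses.mk (π g)), ?_⟩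
  · rw [MonoidHom.mem_ker]
    simp only [map_mul, map_inv, hs, y, h]
    rw [mul_inv_eq_one, mul_assoc, inv_mul_eq_iff_eq_mul, ← eq_mul_inv_iff_mul_eq]
    exact hx.symm
  · simp only [h]
    rw [ConjClasses.mk_eq_mk_iff_isConj, isConj_iff]
    exact ⟨y, by group⟩

lemma irrF_prod (A B : Type) [Group A] [Group B] [Finite A] [Finite B] [DecidableEq (A × B → ℂ)] :
    irrF (A × B) = (irrF A ×ˢ irrF B).image extProd := by
  symm
  apply Finset.eq_of_subset_of_card_le
  · intro φ hφ
    obtain ⟨⟨χ, ψ⟩, h, rfl⟩ := Finset.mem_image.1 hφ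
    rw [Finset.mem_product, mem_irrF, mem_irrF] at h
    exact mem_irrF.2 (extProd_mem h.1 h.2)
  · rw [Finset.card_image_of_injOn extProd_inj, Finset.card_product, card_irrF, card_irrF,
      card_irrF]
    exact card_conj_prod A B

end CharTheory3
section A6

open Equiv.Perm

lemma parts6 (s : Multiset ℕ) (h2 : ∀ x ∈ s, 2 ≤ x) (hs : s.sum ≤ 6)
    (he : Even (s.sum + s.card)) :
    s ∈ ({0, {3}, {2, 2}, {3, 3}, {4, 2}, {5}} : Finset (Multiset ℕ)) := by
  induction s using Quotient.inductionOn with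
  | _ l =>
  simp only [Multiset.quot_mk_to_coe, Multiset.mem_coe, Multiset.sum_coe,
    Multiset.coe_card] at h2 hs he ⊢
  match l with
  | [] => simp
  | [a] =>
    simp at h2 hs he
    interval_cases a <;> revert he <;> decide
  | [a, b] =>
    simp at h2 hs he
    obtain ⟨ha, hb⟩ := h2
    have : a ≤ 4 := by omega
    have : b ≤ 4 := by omega
    interval_cases a <;> interval_cases b <;> first | omega | (revert he; decide)
  | [a, b, c] =>
    simp at h2 hs he
    obtain ⟨ha, hb, hc⟩ := h2
    have h : a = 2 ∧ b = 2 ∧ c = 2 := by omega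
    obtain ⟨rfl, rfl, rfl⟩ := h
    revert he; decide
  | a :: b :: c :: d :: t =>
    simp at h2 hs
    omega

lemma cycleType_A6 (σ : alternatingGroup (Fin 6)) :
    (σ : Equiv.Perm (Fin 6)).cycleType ∈
      ({0, {3}, {2, 2}, {3, 3}, {4, 2}, {5}} : Finset (Multiset ℕ)) := by
  apply parts6
  · intro x hx
    exact two_le_of_mem_cycleType hx
  · have := (σ : Equiv.Perm (Fin 6)).sum_cycleType_le
    simpa using this
  · have h1 : sign (σ : Equiv.Perm (Fin 6)) = 1 := mem_alternatingGroup.1 σ.2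
    rw [sign_of_cycleType] at h1
    by_contra hodd
    rw [Nat.not_even_iff_odd] at hodd
    rw [hodd.neg_one_pow] at h1
    exact absurd h1 (by decide)

lemma conj_help {P : Type*} [Group P] (u v β s t : P) (h1 : u * β * u⁻¹ = s)
    (h2 : v * β * v⁻¹ = t) : v * u⁻¹ * s * (v * u⁻¹)⁻¹ = t := by
  subst h1 h2
  group

lemma card_conj_A6 : Nat.card (ConjClasses (alternatingGroup (Fin 6))) ≤ 9 := by
  classical
  let P := Equiv.Perm (Fin 6)
  -- base representatives of the classes of the symmetric group
  let b : P → P := fun σ => Quotient.out (ConjClasses.mk σ)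
  have hb : ∀ σ, IsConj (b σ) σ := fun σ =>
    ConjClasses.mk_eq_mk_iff_isConj.1 (Quotient.out_eq (ConjClasses.mk σ))
  have hb2 : ∀ σ τ, IsConj σ τ → b σ = b τ := fun σ τ h => by
    simp only [b, ConjClasses.mk_eq_mk_iff_isConj.2 h]
  choose x hx using fun σ => isConj_iff.1 (hb σ)
  let r : ConjClasses (alternatingGroup (Fin 6)) → alternatingGroup (Fin 6) := Quotient.out
  have hr : ∀ c, ConjClasses.mk (r c) = c := Quotient.out_eq
  let F : ConjClasses (alternatingGroup (Fin 6)) → Multiset ℕ × ℤˣ := fun c =>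
    ((r c : P).cycleType, if (r c : P).cycleType.sum ≤ 4 then 1 else sign (x (r c)))
  have hinj : Function.Injective F := by
    intro c d h
    simp only [F, Prod.mk.injEq] at h
    obtain ⟨h1, h2⟩ := h
    have hc : IsConj (r c : P) (r d : P) := isConj_iff_cycleType_eq.2 h1
    rw [← hr c, ← hr d, ConjClasses.mk_eq_mk_iff_isConj]
    by_cases h4 : (r c : P).cycleType.sum ≤ 4
    · apply alternatingGroup.isConj_of hc
      rw [sum_cycleType] at h4
      simp; omega
    · rw [if_neg h4, if_neg (h1 ▸ h4)] at h2
      have e := hb2 _ _ hc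
      have e1 := hx (r c)
      have e2 := hx (r d)
      rw [← e] at e2
      refine isConj_iff.2 ⟨⟨x (r d) * (x (r c))⁻¹, ?_⟩, ?_⟩
      · rw [mem_alternatingGroup, map_mul, map_inv, h2, mul_inv_cancel]
      · apply Subtype.ext
        change x (r d) * (x (r c))⁻¹ * (r c : P) * (x (r d) * (x (r c))⁻¹)⁻¹ = (r d : P)
        exact conj_help _ _ _ _ _ e1 e2
  let T : Finset (Multiset ℕ × ℤˣ) :=
    {(0, 1), ({3}, 1), ({2, 2}, 1), ({3, 3}, 1), ({3, 3}, -1), ({4, 2}, 1), ({4, 2}, -1),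
      ({5}, 1), ({5}, -1)}
  have hT : ∀ c, F c ∈ T := by
    intro c
    have h := cycleType_A6 (r c)
    have hs := Int.units_eq_one_or (sign (x (r c)))
    simp only [Finset.mem_insert, Finset.mem_singleton] at h
    simp only [F]
    rcases h with h | h | h | h | h | h <;> rw [h] <;> rcases hs with hs | hs <;> rw [hs] <;> decide
  calc Nat.card (ConjClasses (alternatingGroup (Fin 6))) ≤ Nat.card T :=
        Nat.card_le_card_of_injective (fun c => (⟨F c, hT c⟩ : T))
          (fun c d h => hinj (congrArg Subtype.val h))
    _ = T.card := by simp
    _ ≤ 9 := by decide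

lemma card_A6 : Nat.card (alternatingGroup (Fin 6)) = 360 := by
  have := two_mul_nat_card_alternatingGroup (α := Fin 6)
  rw [Nat.card_perm] at this
  simp [Nat.factorial] at this ⊢
  omega

lemma one_mem_irr (G : Type) [Group G] [Finite G] : (1 : G → ℂ) ∈ IrrChar G := by
  cases nonempty_fintype G
  have h : (Representation.trivial ℂ G ℂ).character = 1 := by
    funext g
    change LinearMap.trace ℂ ℂ LinearMap.id = 1
    simp
  rw [← h]
  apply ofrep_mem_irr
  rw [h]
  simp

lemma deg_sum_A6 (hperf : commutator (alternatingGroup (Fin 6)) = ⊤) :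
    18 * (irrF (alternatingGroup (Fin 6))).card ≤
      5 * ∑ χ ∈ irrF (alternatingGroup (Fin 6)), charDeg χ := by
  classical
  have h9 := card_conj_A6
  rw [← card_irrF] at h9
  have hsq := sum_sq_deg (alternatingGroup (Fin 6))
  rw [card_A6] at hsq
  have h1 := mem_irrF.2 (one_mem_irr (alternatingGroup (Fin 6)))
  have hd1 : charDeg (1 : alternatingGroup (Fin 6) → ℂ) = 1 := by simp [charDeg]
  rw [← Finset.add_sum_erase _ _ h1, hd1] at hsq ⊢
  rw [← Finset.card_erase_add_one h1] at h9 ⊢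
  set t := (irrF (alternatingGroup (Fin 6))).erase 1 with ht
  have hge : ∀ χ ∈ t, 2 ≤ charDeg χ := by
    intro χ hχ
    rw [ht, Finset.mem_erase, mem_irrF] at hχ
    have hp := deg_pos hχ.2
    have : charDeg χ ≠ 1 := fun h => hχ.1 (linear_trivial hperf hχ.2 h)
    omega
  let e : (alternatingGroup (Fin 6) → ℂ) → ℕ := fun χ => charDeg χ - 2
  have he : ∀ χ ∈ t, charDeg χ = e χ + 2 := fun χ hχ => by
    have := hge χ hχ
    simp only [e]; omega
  have s1 : ∑ χ ∈ t, charDeg χ = ∑ χ ∈ t, e χ + 2 * t.card := by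
    rw [Finset.sum_congr rfl he, Finset.sum_add_distrib]; simp [mul_comm]
  have s2 : ∑ χ ∈ t, charDeg χ ^ 2 = ∑ χ ∈ t, e χ ^ 2 + 4 * ∑ χ ∈ t, e χ + 4 * t.card := by
    rw [Finset.sum_congr rfl (fun χ hχ => by
      rw [he χ hχ, show (e χ + 2) ^ 2 = e χ ^ 2 + 4 * e χ + 4 by ring]),
      Finset.sum_add_distrib, Finset.sum_add_distrib, Finset.mul_sum]
    simp [mul_comm]
  have s3 : ∑ χ ∈ t, e χ ^ 2 ≤ (∑ χ ∈ t, e χ) ^ 2 :=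
    Finset.sum_sq_le_sq_sum_of_nonneg (fun _ _ => Nat.zero_le _)
  rw [s1]
  rw [s2] at hsq
  have hT : 17 ≤ ∑ χ ∈ t, e χ := by
    by_contra hlt
    have h16 : ∑ χ ∈ t, e χ ≤ 16 := by omega
    have h256 := Nat.pow_le_pow_left h16 2
    norm_num at hsq h256
    omega
  omega

end A6
section Final

lemma comp_charDeg {G A B : Type} [Group G] [Group A] [Group B] [Finite A] [Finite B]
    (π : G →* A × B) {χ : A → ℂ} {ψ : B → ℂ} (hχ : χ ∈ IrrChar A) (hψ : ψ ∈ IrrChar B) :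
    charDeg (fun g => extProd (χ, ψ) (π g)) = charDeg χ * charDeg ψ := by
  have h1 := irr_deg hχ
  have h2 := irr_deg hψ
  have : extProd (χ, ψ) (π 1) = ((charDeg χ * charDeg ψ : ℕ) : ℂ) := by
    rw [map_one]
    change χ 1 * ψ 1 = _
    rw [h1, h2]; push_cast; rfl
  change ⌊(extProd (χ, ψ) (π 1)).re⌋₊ = _
  rw [this]
  rw [Complex.natCast_re, Nat.floor_natCast]

lemma key_count (G A B : Type) [Group G] [Group A] [Group B] [Finite G] [Finite A] [Finite B]
    (π : G →* A × B) (hπ : Function.Surjective π) (hk : Nat.card π.ker = 3)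
    (M : Subgroup G) (hperf : commutator M = ⊤)
    (hM : ∀ z, π z = 1 → z ∈ M) (hc : ∀ z, π z = 1 → ∀ g, z * g = g * z)
    (hA : 18 * (irrF A).card ≤ 5 * ∑ χ ∈ irrF A, charDeg χ) :
    16 * (irrF G).card ≤ 5 * ∑ χ ∈ irrF G, charDeg χ := by
  classical
  cases nonempty_fintype G
  let X : Finset (G → ℂ) := (irrF (A × B)).image (fun φ g => φ (π g))
  have hinj : Function.Injective (fun (φ : A × B → ℂ) (g : G) => φ (π g)) :=
    hπ.injective_comp_right
  have hXsub : X ⊆ irrF G := by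
    intro χ hχ
    obtain ⟨φ, hφ, rfl⟩ := Finset.mem_image.1 hχ
    exact mem_irrF.2 (inflate π hπ (mem_irrF.1 hφ))
  have hXcard : X.card = (irrF A).card * (irrF B).card := by
    rw [Finset.card_image_of_injective _ hinj, irrF_prod, Finset.card_image_of_injOn extProd_inj,
      Finset.card_product]
  have hXsum : (∑ χ ∈ irrF A, charDeg χ) * (irrF B).card ≤ ∑ χ ∈ X, charDeg χ := by
    rw [Finset.sum_image (fun _ _ _ _ h => hinj h), irrF_prod, Finset.sum_image extProd_inj,
      Finset.sum_product, Finset.sum_mul]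
    apply Finset.sum_le_sum
    intro χ hχ
    rw [mul_comm, ← smul_eq_mul]
    apply Finset.card_nsmul_le_sum
    intro ψ hψ
    rw [comp_charDeg π (mem_irrF.1 hχ) (mem_irrF.1 hψ)]
    exact Nat.le_mul_of_pos_right _ (deg_pos (mem_irrF.1 hψ))
  have hY : ∀ χ ∈ irrF G \ X, 3 ≤ charDeg χ := by
    intro χ hχ
    rw [Finset.mem_sdiff, mem_irrF] at hχ
    obtain ⟨h1, h2⟩ := hχ
    obtain ⟨V, _, _, _, ρ, rfl, -⟩ := exists_rep_of_mem_irr h1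
    by_cases hker : ∀ g, π g = 1 → ρ g = 1
    · obtain ⟨φ, hφ, h⟩ := deflate π hπ ρ h1 hker
      exact absurd (Finset.mem_image.2 ⟨φ, mem_irrF.2 hφ, h.symm⟩) h2
    · push Not at hker
      obtain ⟨z, hz, hne⟩ := hker
      have hz3 : z ^ 3 = 1 := by
        have := pow_card_eq_one' (x := (⟨z, hz⟩ : π.ker))
        rw [hk] at this
        exact congrArg Subtype.val this
      have := three_dvd M hperf ρ h1 z (hM z hz) (hc z hz) hz3 hne
      exact Nat.le_of_dvd (deg_pos h1) this
  have hYsum : (irrF G \ X).card * 3 ≤ ∑ χ ∈ irrF G \ X, charDeg χ := by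
    rw [← smul_eq_mul]
    exact Finset.card_nsmul_le_sum _ _ _ hY
  have hcard : (irrF G).card ≤ 3 * ((irrF A).card * (irrF B).card) := by
    have := card_conj_ext π hπ
    rw [hk, ← card_irrF, ← card_irrF] at this
    rwa [irrF_prod, Finset.card_image_of_injOn extProd_inj, Finset.card_product] at this
  have e1 := Finset.card_sdiff_add_card_eq_card hXsub
  have e2 := Finset.sum_sdiff (f := charDeg) hXsub
  have hB := Nat.mul_le_mul_right (irrF B).card hA
  rw [← e2]
  rw [← e1] at hcard ⊢
  rw [hXcard] at *
  rw [mul_assoc, mul_assoc] at hB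
  omega

lemma acd_eq (G : Type) [Group G] [Finite G] :
    acd G = (∑ χ ∈ irrF G, (charDeg χ : ℝ)) / (irrF G).card := by
  have hs : {χ ∈ IrrChar G | True} = ((irrF G : Finset (G → ℂ)) : Set (G → ℂ)) := by
    ext χ; simp [mem_irrF]
  unfold acd acdRel
  rw [hs, finsum_mem_coe_finset, Set.ncard_coe_finset]

end Final

/-- If the finite group `G` is a central product `G = MC` where `M` is perfect
with center of order `3` and `M/Z(M) ≅ A₆`, and `M ∩ C = Z(M)`, then
`acd(G) ≥ 16/5`. -/
theorem acd_ge_of_central_product_triple_cover_A6 (G : Type) [Group G] [Finite G]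
    (M C : Subgroup G)
    (hprod : ∀ g : G, ∃ m ∈ M, ∃ c ∈ C, g = m * c)
    (hcomm : ∀ m ∈ M, ∀ c ∈ C, m * c = c * m)
    (hperf : commutator ↥M = ⊤)
    (hcenter : Nat.card (Subgroup.center ↥M) = 3)
    (hquot : Nonempty ((↥M ⧸ Subgroup.center ↥M) ≃* alternatingGroup (Fin 6)))
    (hZ : M ⊓ C = (Subgroup.center ↥M).map M.subtype) :
    16 / 5 ≤ acd G := by
  have hMn : M.Normal := ⟨fun n hn g => by
    obtain ⟨m, hm, c, hc, rfl⟩ := hprod g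
    have : m * c * n * (m * c)⁻¹ = m * n * m⁻¹ := by
      rw [mul_assoc m c n, ← hcomm n hn c hc]; group
    rw [this]
    exact M.mul_mem (M.mul_mem hm hn) (M.inv_mem hm)⟩
  have hCn : C.Normal := ⟨fun n hn g => by
    obtain ⟨m, hm, c, hc, rfl⟩ := hprod g
    have h2 := C.mul_mem (C.mul_mem hc hn) (C.inv_mem hc)
    have : m * c * n * (m * c)⁻¹ = c * n * c⁻¹ := by
      have h3 := hcomm m hm _ h2
      calc m * c * n * (m * c)⁻¹ = m * (c * n * c⁻¹) * m⁻¹ := by group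
        _ = c * n * c⁻¹ := by rw [h3]; group
    rw [this]
    exact h2⟩
  let f : M →* G ⧸ C := (QuotientGroup.mk' C).comp M.subtype
  have hf : Function.Surjective f := by
    intro q
    obtain ⟨g, rfl⟩ := QuotientGroup.mk_surjective q
    obtain ⟨m, hm, c, hc, rfl⟩ := hprod g
    refine ⟨⟨m, hm⟩, ?_⟩
    change (QuotientGroup.mk m : G ⧸ C) = QuotientGroup.mk (m * c)
    rw [QuotientGroup.eq]
    simpa using hc
  have hfk : f.ker = Subgroup.center M := by
    ext m
    have h1 : m ∈ f.ker ↔ (m : G) ∈ C := by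
      rw [MonoidHom.mem_ker]
      exact QuotientGroup.eq_one_iff (m : G)
    rw [h1]
    have h2 : (m : G) ∈ M ⊓ C ↔ (m : G) ∈ (Subgroup.center ↥M).map M.subtype := by rw [hZ]
    have h3 : (m : G) ∈ (Subgroup.center ↥M).map M.subtype ↔ m ∈ Subgroup.center M := by
      constructor
      · rintro ⟨n, hn, h⟩
        rwa [← Subtype.ext h]
      · intro h
        exact ⟨m, h, rfl⟩
    rw [← h3, ← h2]
    exact ⟨fun h => ⟨m.2, h⟩, fun h => h.2⟩
  obtain ⟨q⟩ := hquot
  let E : G ⧸ C ≃* alternatingGroup (Fin 6) :=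
    (QuotientGroup.quotientKerEquivOfSurjective f hf).symm.trans
      ((QuotientGroup.quotientMulEquivOfEq hfk).trans q)
  have hA6 : commutator (alternatingGroup (Fin 6)) = ⊤ := by
    have hs : Function.Surjective (E.toMonoidHom.comp f) := E.surjective.comp hf
    have h := Subgroup.map_commutator (⊤ : Subgroup M) ⊤ (E.toMonoidHom.comp f)
    rw [← commutator_def, hperf, Subgroup.map_top_of_surjective _ hs] at h
    rw [commutator_def, ← h]
  let π : G →* alternatingGroup (Fin 6) × (G ⧸ M) :=
    (E.toMonoidHom.comp (QuotientGroup.mk' C)).prod (QuotientGroup.mk' M)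
  have hπ : Function.Surjective π := by
    rintro ⟨a, b⟩
    obtain ⟨⟨m, hm⟩, hma⟩ := hf (E.symm a)
    obtain ⟨g, rfl⟩ := QuotientGroup.mk_surjective b
    obtain ⟨m', hm', c, hc, rfl⟩ := hprod g
    refine ⟨m * c, Prod.ext ?_ ?_⟩
    · change E (QuotientGroup.mk (m * c)) = a
      rw [← E.apply_symm_apply a, ← hma]
      congr 1
      change (QuotientGroup.mk (m * c) : G ⧸ C) = QuotientGroup.mk m
      rw [eq_comm, QuotientGroup.eq]
      simpa using hc
    · change (QuotientGroup.mk (m * c) : G ⧸ M) = QuotientGroup.mk (m' * c)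
      rw [hcomm m hm c hc, hcomm m' hm' c hc, QuotientGroup.eq]
      have : (c * m)⁻¹ * (c * m') = m⁻¹ * m' := by group
      rw [this]
      exact M.mul_mem (M.inv_mem hm) hm'
  have hker : ∀ z, π z = 1 ↔ z ∈ M ⊓ C := by
    intro z
    have : π z = 1 ↔ E (QuotientGroup.mk z) = 1 ∧ (QuotientGroup.mk z : G ⧸ M) = 1 :=
      Prod.ext_iff
    rw [this, EmbeddingLike.map_eq_one_iff, QuotientGroup.eq_one_iff, QuotientGroup.eq_one_iff,
      Subgroup.mem_inf, and_comm]
  have hkk : π.ker = M ⊓ C := by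
    ext z; exact hker z
  have hk : Nat.card π.ker = 3 := by
    rw [hkk, hZ, ← hcenter]
    exact Nat.card_congr
      ((Subgroup.center M).equivMapOfInjective M.subtype M.subtype_injective).symm.toEquiv
  have key := key_count G (alternatingGroup (Fin 6)) (G ⧸ M) π hπ hk M hperf
    (fun z hz => ((hker z).1 hz).1)
    (fun z hz g => by
      obtain ⟨hzM, hzC⟩ := (hker z).1 hz
      obtain ⟨m, hm, c, hc, rfl⟩ := hprod g
      rw [← mul_assoc, ← hcomm m hm z hzC, mul_assoc, hcomm z hzM c hc, mul_assoc])
    (deg_sum_A6 hA6)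
  have hpos : 0 < (irrF G).card := Finset.card_pos.2 ⟨1, mem_irrF.2 (one_mem_irr G)⟩
  rw [acd_eq, le_div_iff₀ (by exact_mod_cast hpos)]
  have key' : (16 : ℝ) * (irrF G).card ≤ 5 * ∑ χ ∈ irrF G, (charDeg χ : ℝ) := by
    exact_mod_cast key
  linarith
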